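/- Let S be a ℂ-submodule of (m × n → ℂ). Then the following are equivalent: (a) there exists a nonzero matrix T : Matrix (m × n) (m × n) ℂ supported on S with trB T = 0; (b) there exist two distinct density matrices ρ1 ≠ ρ2, both supported on S, with trB ρ1 = trB ρ2. -/

import Mathlib

open scoped ComplexOrder

noncomputable section

/-- Partial trace over the second factor. -/
def trB {m n : Type*} [Fintype n] (ρ : Matrix (m × n) (m × n) ℂ) : Matrix m m ℂ :=
  Matrix.of fun i i' => ∑ j, ρ (i, j) (i', j)

/-- Partial trace over the first factor. -/
def trA {m n : Type*} [Fintype m] (ρ : Matrix (m × n) (m × n) ℂ) : Matrix n n ℂ :=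
  Matrix.of fun j j' => ∑ i, ρ (i, j) (i, j')

/-- The outer product `|ψ⟩⟨φ|`. -/
def outer {k : Type*} (ψ φ : k → ℂ) : Matrix k k ℂ :=
  Matrix.of fun x y => ψ x * (starRingEnd ℂ) (φ y)

/-- A density matrix: positive semidefinite with trace one. -/
def IsDensity {k : Type*} [Fintype k] (ρ : Matrix k k ℂ) : Prop :=
  ρ.PosSemidef ∧ ρ.trace = 1

/-- `P` is the matrix of the orthogonal projection onto the submodule `S`. -/
def IsOrthProjOnto {k : Type*} [Fintype k] (S : Submodule ℂ (k → ℂ)) (P : Matrix k k ℂ) : Prop :=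
  P.IsHermitian ∧ P * P = P ∧ (∀ x, P.mulVec x ∈ S) ∧ ∀ y ∈ S, P.mulVec y = y

/-- `T` is supported on `S`: `P * T * P = T` for the orthogonal projection `P` onto `S`. -/
def SupportedOn {k : Type*} [Fintype k] (S : Submodule ℂ (k → ℂ)) (T : Matrix k k ℂ) : Prop :=
  ∃ P, IsOrthProjOnto S P ∧ P * T * P = T

/-- The set of reduced density matrices on the first factor. -/
def DB {m n : Type*} [Fintype m] [Fintype n] (S : Submodule ℂ (m × n → ℂ)) :
    Set (Matrix m m ℂ) :=
  {σ | ∃ ρ, IsDensity ρ ∧ SupportedOn S ρ ∧ trB ρ = σ}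

/-!
A nonzero `T` in the kernel can be replaced by a Hermitian one: among `T + Tᴴ` and `i (T - Tᴴ)` at
least one is nonzero. A Hermitian `H` supported on `S` satisfies `P H = H = H P` for the orthogonal
projection `P` onto `S`, so `H = ((P + H) / 2)² - ((P - H) / 2)²` is a difference of positive
semidefinite matrices supported on `S`. If `H` is traceless, these two have the same nonzero trace,
and dividing by it gives two density matrices. Conversely, take the difference of the two density
matrices, which is supported on `S` because the orthogonal projection onto `S` is unique.
-/

open scoped Matrix

theorem exists_smul_add_star_smul_ne_zero {A : Type*} [AddCommGroup A] [StarAddMonoid A]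
    [Module ℂ A] [StarModule ℂ A] {x : A} (hx : x ≠ 0) : ∃ c : ℂ, c • x + star (c • x) ≠ 0 := by
  by_contra! vanish
  have star_eq_neg : star x = -x := by
    simpa using eq_neg_of_add_eq_zero_right (vanish 1)
  have two_I_smul : (2 * Complex.I) • x = 0 := by
    calc (2 * Complex.I) • x = Complex.I • x + star (Complex.I • x) := by
          rw [star_smul, star_eq_neg, Complex.star_def, Complex.conj_I]
          module
      _ = 0 := vanish Complex.I
  exact hx ((smul_eq_zero.mp two_I_smul).resolve_left (by simp))

section Support

variable {k : Type*} [Fintype k] {S : Submodule ℂ (k → ℂ)} {P Q T U : Matrix k k ℂ}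

namespace IsOrthProjOnto

theorem mul_eq_of_forall_mulVec_mem {l : Type*} [Fintype l] {M : Matrix k l ℂ}
    (hP : IsOrthProjOnto S P) (hM : ∀ x, M.mulVec x ∈ S) : P * M = M := by
  refine Matrix.ext_iff_mulVec.mpr fun x => ?_
  rw [← Matrix.mulVec_mulVec]
  exact hP.2.2.2 _ (hM x)

theorem unique (hP : IsOrthProjOnto S P) (hQ : IsOrthProjOnto S Q) : P = Q := by
  have hPQ : P * Q = Q := hP.mul_eq_of_forall_mulVec_mem hQ.2.2.1
  have hQP : Q * P = P := hQ.mul_eq_of_forall_mulVec_mem hP.2.2.1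
  calc P = Pᴴ := hP.1.eq.symm
    _ = (Q * P)ᴴ := by rw [hQP]
    _ = P * Q := by rw [Matrix.conjTranspose_mul, hP.1.eq, hQ.1.eq]
    _ = Q := hPQ

theorem supportedOn (hP : IsOrthProjOnto S P) : SupportedOn S P :=
  ⟨P, hP, by rw [hP.2.1, hP.2.1]⟩

end IsOrthProjOnto

namespace SupportedOn

theorem proj_mul_mul_proj (hT : SupportedOn S T) (hP : IsOrthProjOnto S P) : P * T * P = T := by
  obtain ⟨Q, hQ, hQT⟩ := hT
  rwa [hP.unique hQ]

theorem proj_mul (hT : SupportedOn S T) (hP : IsOrthProjOnto S P) : P * T = T := by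
  rw [← hT.proj_mul_mul_proj hP, ← mul_assoc, ← mul_assoc, hP.2.1]

theorem mul_proj (hT : SupportedOn S T) (hP : IsOrthProjOnto S P) : T * P = T := by
  rw [← hT.proj_mul_mul_proj hP, mul_assoc, hP.2.1]

theorem add (hT : SupportedOn S T) (hU : SupportedOn S U) : SupportedOn S (T + U) := by
  obtain ⟨P, hP, hPT⟩ := hT
  exact ⟨P, hP, by rw [mul_add, add_mul, hPT, hU.proj_mul_mul_proj hP]⟩

theorem smul (hT : SupportedOn S T) (c : ℂ) : SupportedOn S (c • T) := by
  obtain ⟨P, hP, hPT⟩ := hT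
  exact ⟨P, hP, by rw [Matrix.mul_smul, Matrix.smul_mul, hPT]⟩

theorem sub (hT : SupportedOn S T) (hU : SupportedOn S U) : SupportedOn S (T - U) := by
  obtain ⟨P, hP, hPT⟩ := hT
  exact ⟨P, hP, by rw [mul_sub, sub_mul, hPT, hU.proj_mul_mul_proj hP]⟩

theorem mul (hT : SupportedOn S T) (hU : SupportedOn S U) : SupportedOn S (T * U) := by
  have ⟨P, hP, _⟩ := hT
  exact ⟨P, hP, by rw [← mul_assoc, hT.proj_mul hP, mul_assoc, hU.mul_proj hP]⟩

theorem conjTranspose (hT : SupportedOn S T) : SupportedOn S Tᴴ := by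
  obtain ⟨P, hP, hPT⟩ := hT
  refine ⟨P, hP, ?_⟩
  calc P * Tᴴ * P = (P * T * P)ᴴ := by
        rw [Matrix.conjTranspose_mul, Matrix.conjTranspose_mul, hP.1.eq, mul_assoc]
    _ = Tᴴ := by rw [hPT]

theorem exists_posSemidef_sub_eq (hT : SupportedOn S T) (hermitian : T.IsHermitian) :
    ∃ A B : Matrix k k ℂ, A.PosSemidef ∧ SupportedOn S A ∧ B.PosSemidef ∧ SupportedOn S B ∧
      A - B = T := by
  have ⟨P, hP, _⟩ := hT
  have posSemidef_sq {X : Matrix k k ℂ} (hX : X.IsHermitian) : (X * X).PosSemidef := by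
    simpa only [hX.eq] using Matrix.posSemidef_conjTranspose_mul_self X
  have quarter_nonneg : (0 : ℂ) ≤ 1 / 4 := by positivity
  have hadd := hP.supportedOn.add hT
  have hsub := hP.supportedOn.sub hT
  refine ⟨(1 / 4 : ℂ) • ((P + T) * (P + T)), (1 / 4 : ℂ) • ((P - T) * (P - T)),
    (posSemidef_sq (hP.1.add hermitian)).smul quarter_nonneg, (hadd.mul hadd).smul _,
    (posSemidef_sq (hP.1.sub hermitian)).smul quarter_nonneg, (hsub.mul hsub).smul _, ?_⟩
  simp only [add_mul, mul_add, sub_mul, mul_sub, hT.proj_mul hP, hT.mul_proj hP]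
  module

theorem exists_isHermitian_ne_zero_map_eq_zero {E : Type*} [AddCommGroup E] [Module ℂ E]
    {Φ : Matrix k k ℂ →ₗ[ℂ] E} (hΦ_star : ∀ X, Φ X = 0 → Φ Xᴴ = 0)
    (hT : SupportedOn S T) (hne : T ≠ 0) (hker : Φ T = 0) :
    ∃ H : Matrix k k ℂ, H.IsHermitian ∧ H ≠ 0 ∧ SupportedOn S H ∧ Φ H = 0 := by
  obtain ⟨c, hc⟩ := exists_smul_add_star_smul_ne_zero hne
  have hcker : Φ (c • T) = 0 := by rw [map_smul, hker, smul_zero]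
  exact ⟨c • T + (c • T)ᴴ, Matrix.isHermitian_add_transpose_self _, hc,
    (hT.smul c).add (hT.smul c).conjTranspose,
    by rw [map_add, hcker, hΦ_star _ hcker, add_zero]⟩

end SupportedOn

end Support

section Density

variable {k : Type*} [Fintype k] {A B : Matrix k k ℂ}

theorem trace_ne_zero_of_posSemidef_of_ne (hA : A.PosSemidef) (hB : B.PosSemidef)
    (htrace : A.trace = B.trace) (hne : A ≠ B) : A.trace ≠ 0 := by
  intro hzero
  have hA_zero : A = 0 := hA.trace_eq_zero_iff.mp hzero
  have hB_zero : B = 0 := hB.trace_eq_zero_iff.mp (htrace ▸ hzero)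
  exact hne (hA_zero.trans hB_zero.symm)

theorem isDensity_inv_trace_smul (hA : A.PosSemidef) (hne : A.trace ≠ 0) :
    IsDensity (A.trace⁻¹ • A) :=
  ⟨hA.smul (inv_nonneg.mpr hA.trace_nonneg),
    by rw [Matrix.trace_smul, smul_eq_mul, inv_mul_cancel₀ hne]⟩

end Density

theorem nontrivial_kernel_iff_nonunique_preimage_general
    {k E : Type*} [Fintype k] [AddCommGroup E] [Module ℂ E] (S : Submodule ℂ (k → ℂ))
    (Φ : Matrix k k ℂ →ₗ[ℂ] E) (hΦ_star : ∀ X, Φ X = 0 → Φ Xᴴ = 0)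
    (hΦ_trace : ∀ X, Φ X = 0 → X.trace = 0) :
    (∃ T : Matrix k k ℂ, T ≠ 0 ∧ SupportedOn S T ∧ Φ T = 0) ↔
    (∃ ρ1 ρ2 : Matrix k k ℂ, ρ1 ≠ ρ2 ∧
      IsDensity ρ1 ∧ SupportedOn S ρ1 ∧ IsDensity ρ2 ∧ SupportedOn S ρ2 ∧ Φ ρ1 = Φ ρ2) := by
  constructor
  · rintro ⟨T, hne, hT, hker⟩
    obtain ⟨H, hermitian, hH_ne, hH, hH_ker⟩ :=
      hT.exists_isHermitian_ne_zero_map_eq_zero hΦ_star hne hker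
    obtain ⟨A, B, hA, hAS, hB, hBS, rfl⟩ := hH.exists_posSemidef_sub_eq hermitian
    have hAB : A ≠ B := sub_ne_zero.mp hH_ne
    have hΦ : Φ A = Φ B := by rwa [map_sub, sub_eq_zero] at hH_ker
    have htrace : A.trace = B.trace := by
      simpa only [Matrix.trace_sub, sub_eq_zero] using hΦ_trace _ hH_ker
    have hA_trace : A.trace ≠ 0 := trace_ne_zero_of_posSemidef_of_ne hA hB htrace hAB
    refine ⟨A.trace⁻¹ • A, A.trace⁻¹ • B, (smul_right_injective _ (inv_ne_zero hA_trace)).ne hAB,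
      isDensity_inv_trace_smul hA hA_trace, hAS.smul _, ?_, hBS.smul _, by simp only [map_smul, hΦ]⟩
    rw [htrace] at hA_trace ⊢
    exact isDensity_inv_trace_smul hB hA_trace
  · rintro ⟨ρ1, ρ2, hne, -, hρ1, -, hρ2, hΦ⟩
    exact ⟨ρ1 - ρ2, sub_ne_zero.mpr hne, hρ1.sub hρ2, by rw [map_sub, hΦ, sub_self]⟩

section PartialTrace

variable {m n : Type*} [Fintype n]

/-- The partial trace `trB` over the second factor, bundled as a `ℂ`-linear map. -/
def trBLinearMap : Matrix (m × n) (m × n) ℂ →ₗ[ℂ] Matrix m m ℂ where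
  toFun := trB
  map_add' A B := by ext; simp [trB, Finset.sum_add_distrib]
  map_smul' c A := by ext; simp [trB, Finset.mul_sum]

theorem trB_conjTranspose (A : Matrix (m × n) (m × n) ℂ) : trB Aᴴ = (trB A)ᴴ := by
  ext
  simp [trB]

theorem trace_trB [Fintype m] (A : Matrix (m × n) (m × n) ℂ) : (trB A).trace = A.trace := by
  simp [trB, Matrix.trace, Fintype.sum_prod_type]

end PartialTrace

theorem nontrivial_kernel_iff_nonunique_preimage
    {m n : Type*} [Fintype m] [Fintype n] [DecidableEq m] [DecidableEq n]
    (S : Submodule ℂ (m × n → ℂ)) :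
    (∃ T : Matrix (m × n) (m × n) ℂ, T ≠ 0 ∧ SupportedOn S T ∧ trB T = 0) ↔
    (∃ ρ1 ρ2 : Matrix (m × n) (m × n) ℂ, ρ1 ≠ ρ2 ∧
      IsDensity ρ1 ∧ SupportedOn S ρ1 ∧ IsDensity ρ2 ∧ SupportedOn S ρ2 ∧
      trB ρ1 = trB ρ2) := by
  exact nontrivial_kernel_iff_nonunique_preimage_general S trBLinearMap
    (fun X (hX : trB X = 0) => by simp [trBLinearMap, trB_conjTranspose, hX])
    (fun X (hX : trB X = 0) => by simp [← trace_trB, hX])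

end
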